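/- arXiv:2605.08134 — 3 statements merged into one kernel-verified Lean document; each statement's English description precedes it below -/
import Mathlib

section
/- For every n ≥ 1 and all vectors z, z' ∈ ℝⁿ, the softmax map satisfies ‖softmax(z) − softmax(z')‖₁ ≤ ‖z − z'‖_∞. -/
/-!
Both softmax vectors are probability vectors, so their `ℓ¹` distance is `2 (P(A) - Q(A))`, where `A`
is the set of indices at which the first is at least the second. Put `δ = ‖z - z'‖_∞` and
`t = exp δ`. Passing from `z'` to `z` multiplies the weight of `A` by at most `t` and that of the complement by at least
`t⁻¹`. Hence the odds of `A` grow by a factor at most `t²`, which forces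
`P(A) - Q(A) ≤ (t - 1) / (t + 1) = tanh (δ / 2)` (`two_point_bound`), and `2 tanh (δ / 2) ≤ δ`.
-/

open scoped BigOperators
open Matrix

/-- Softmax of a vector. -/
noncomputable def softmax {n : ℕ} (z : Fin n → ℝ) : Fin n → ℝ :=
  fun j => Real.exp (z j) / ∑ k, Real.exp (z k)

/-- ℓ¹ norm. -/
noncomputable def l1 {n : ℕ} (v : Fin n → ℝ) : ℝ := ∑ j, |v j|

/-- ℓ² (Euclidean) norm. -/
noncomputable def l2 {n : ℕ} (v : Fin n → ℝ) : ℝ := Real.sqrt (∑ j, v j ^ 2)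

/-- ℓ^∞ norm. -/
noncomputable def linf {n : ℕ} (v : Fin n → ℝ) : ℝ := ⨆ j, |v j|

/-- Spectral norm (operator ℓ²→ℓ² norm) of a matrix acting on row vectors. -/
noncomputable def spec {m n : ℕ} (W : Matrix (Fin m) (Fin n) ℝ) : ℝ :=
  sSup {c | ∃ x : Fin m → ℝ, l2 x ≤ 1 ∧ c = l2 (x ᵥ* W)}

/-- Frobenius norm of a matrix. -/
noncomputable def frob {m n : ℕ} (W : Matrix (Fin m) (Fin n) ℝ) : ℝ :=
  Real.sqrt (∑ i, ∑ j, W i j ^ 2)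

/-- Operator norm of `h ↦ h Eᵀ` from ℓ² to ℓ¹. -/
noncomputable def opNorm21 {m d : ℕ} (E : Matrix (Fin m) (Fin d) ℝ) : ℝ :=
  sSup {c | ∃ h : Fin d → ℝ, l2 h ≤ 1 ∧ c = l1 (h ᵥ* Eᵀ)}

/-- Operator norm of `h ↦ h Eᵀ` from ℓ² to ℓ^∞. -/
noncomputable def opNorm2inf {m d : ℕ} (E : Matrix (Fin m) (Fin d) ℝ) : ℝ :=
  sSup {c | ∃ h : Fin d → ℝ, l2 h ≤ 1 ∧ c = linf (h ᵥ* Eᵀ)}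

/-- Condition number `κ(W) = σ_max(W)/σ_min(W)` of an invertible matrix,
expressed as `σ_max(W) · σ_max(W⁻¹)`. -/
noncomputable def condNum {d : ℕ} (W : Matrix (Fin d) (Fin d) ℝ) : ℝ := spec W * spec W⁻¹

/-- The two-point case: weights `(a, b)` against `(a', b')`, where `a` gains at most a factor `t`
and `b` loses at most a factor `t`. The right-hand side is the gain at equality with `b' = t * a'`. -/
lemma two_point_bound {a b a' b' t : ℝ} (ha' : 0 ≤ a') (hb' : 0 ≤ b')
    (hab : 0 < a + b) (hab' : 0 < a' + b') (ht : 1 ≤ t) (h1 : a ≤ t * a') (h2 : b' ≤ t * b) :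
    a / (a + b) - a' / (a' + b') ≤ (t - 1) / (t + 1) := by
  have ht2 : 1 ≤ t ^ 2 := one_le_pow₀ ht
  have hD : 0 < t ^ 2 * a' + b' := by nlinarith
  have hP : a / (a + b) ≤ t ^ 2 * a' / (t ^ 2 * a' + b') := by
    rw [div_le_div_iff₀ hab hD]
    have : a * b' ≤ (t * a') * (t * b) := mul_le_mul h1 h2 hb' (by positivity)
    nlinarith
  have hQ : t ^ 2 * a' / (t ^ 2 * a' + b') - a' / (a' + b') ≤ (t - 1) / (t + 1) := by
    rw [div_sub_div _ _ hD.ne' hab'.ne', div_le_div_iff₀ (mul_pos hD hab') (by linarith)]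
    -- After cancelling `t - 1`, this is AM-GM: the denominator is at least `(t + 1) ^ 2 * a' * b'`.
    have := mul_nonneg (sub_nonneg.2 ht) (sq_nonneg (t * a' - b'))
    nlinarith
  linarith

lemma two_mul_tanh_half_le {δ : ℝ} (hδ : 0 ≤ δ) :
    2 * ((Real.exp δ - 1) / (Real.exp δ + 1)) ≤ δ := by
  have h := Real.le_log_one_add_of_nonneg (sub_nonneg.2 (Real.one_le_exp hδ))
  have e1 : 1 + (Real.exp δ - 1) = Real.exp δ := by ring
  have e2 : Real.exp δ - 1 + 2 = Real.exp δ + 1 := by ring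
  rwa [e1, e2, Real.log_exp, mul_div_assoc] at h

lemma sum_softmax {n : ℕ} (hn : 1 ≤ n) (z : Fin n → ℝ) : ∑ j, softmax z j = 1 := by
  have : Nonempty (Fin n) := ⟨⟨0, hn⟩⟩
  have : 0 < ∑ k, Real.exp (z k) :=
    Finset.sum_pos (fun _ _ => Real.exp_pos _) Finset.univ_nonempty
  simp only [softmax]
  rw [← Finset.sum_div, div_self this.ne']

/-- For every `n ≥ 1` and all `z, z' ∈ ℝⁿ`,
`‖softmax z − softmax z'‖₁ ≤ ‖z − z'‖_∞`. -/
theorem softmax_l1_linf_lipschitz {n : ℕ} (hn : 1 ≤ n) (z z' : Fin n → ℝ) :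
    l1 (fun j => softmax z j - softmax z' j) ≤ linf (fun j => z j - z' j) := by
  have : Nonempty (Fin n) := ⟨⟨0, hn⟩⟩
  set δ := linf (fun j => z j - z' j) with hδ
  have hle : ∀ j, |z j - z' j| ≤ δ := fun j =>
    le_ciSup (f := fun j => |z j - z' j|) (Set.finite_range _).bddAbove j
  have hδ0 : 0 ≤ δ := (abs_nonneg _).trans (hle ⟨0, hn⟩)
  have hexp : ∀ j, Real.exp (z j) ≤ Real.exp δ * Real.exp (z' j) := fun j => by
    rw [← Real.exp_add]
    exact Real.exp_le_exp.2 (by linarith [(abs_le.1 (hle j)).2])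
  have hexp' : ∀ j, Real.exp (z' j) ≤ Real.exp δ * Real.exp (z j) := fun j => by
    rw [← Real.exp_add]
    exact Real.exp_le_exp.2 (by linarith [(abs_le.1 (hle j)).1])
  let A : Finset (Fin n) := Finset.univ.filter fun j => softmax z' j ≤ softmax z j
  have hl1 : l1 (fun j => softmax z j - softmax z' j)
      = 2 * (∑ j ∈ A, softmax z j - ∑ j ∈ A, softmax z' j) := by
    have habs : ∀ j, |softmax z j - softmax z' j|
        = 2 * (if softmax z' j ≤ softmax z j then softmax z j - softmax z' j else 0)
          - (softmax z j - softmax z' j) := fun j => by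
      split_ifs with h
      · rw [abs_of_nonneg (by linarith)]; ring
      · rw [abs_of_nonpos (by linarith)]; ring
    simp only [l1, habs]
    rw [Finset.sum_sub_distrib, ← Finset.mul_sum, ← Finset.sum_filter, Finset.sum_sub_distrib,
      Finset.sum_sub_distrib, sum_softmax hn, sum_softmax hn]
    simp only [A]
    ring
  have hsum : ∀ w : Fin n → ℝ, ∑ j ∈ A, softmax w j
      = (∑ j ∈ A, Real.exp (w j)) / (∑ j ∈ A, Real.exp (w j) + ∑ j ∈ Aᶜ, Real.exp (w j)) :=
    fun w => by
      rw [Finset.sum_add_sum_compl, Finset.sum_div]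
      rfl
  have hnn : ∀ (w : Fin n → ℝ) (B : Finset (Fin n)), 0 ≤ ∑ j ∈ B, Real.exp (w j) :=
    fun w B => Finset.sum_nonneg fun _ _ => (Real.exp_pos _).le
  have hpos : ∀ w : Fin n → ℝ, 0 < ∑ j ∈ A, Real.exp (w j) + ∑ j ∈ Aᶜ, Real.exp (w j) :=
    fun w => by
      rw [Finset.sum_add_sum_compl]
      exact Finset.sum_pos (fun _ _ => Real.exp_pos _) Finset.univ_nonempty
  have key := two_point_bound (hnn z' A) (hnn z' Aᶜ) (hpos z) (hpos z')
    (Real.one_le_exp hδ0)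
    (by rw [Finset.mul_sum]; exact Finset.sum_le_sum fun j _ => hexp j)
    (by rw [Finset.mul_sum]; exact Finset.sum_le_sum fun j _ => hexp' j)
  rw [hl1, hsum z, hsum z']
  linarith [two_mul_tanh_half_le hδ0]
end

section
/- For every n ≥ 1 and all vectors z, z' ∈ ℝⁿ, the softmax map is 1-Lipschitz from ℓ¹ to ℓ¹: ‖softmax(z) − softmax(z')‖₁ ≤ ‖z − z'‖₁. -/
/-!
For probability vectors `p`, `q` the ℓ¹ distance is twice `p(A) - q(A)`, where
`A = {j | q j < p j}`. With `p = softmax z`, `q = softmax z'` and `δ = ‖z - z'‖₁`, the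
odds-ratio bound `p i * q k ≤ exp δ * (q i * p k)` for `i ≠ k` is immediate, since only the two
distinct coordinates `i`, `k` of `z - z'` enter. Summing it over `i ∈ A`, `k ∉ A` gives
`P (1 - Q) ≤ exp δ * (Q (1 - P))` for `P = p(A)`, `Q = q(A)`, and this forces `P - Q ≤ δ / 2`
(`sub_le_half_of_odds_le`).
-/

open scoped BigOperators
open Matrix

lemma softmax_pos {n : ℕ} (z : Fin n → ℝ) (j : Fin n) : 0 < softmax z j :=
  div_pos (Real.exp_pos _) (Finset.sum_pos (fun _ _ => Real.exp_pos _) ⟨j, Finset.mem_univ j⟩)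

lemma softmax_mul_le {n : ℕ} (z z' : Fin n → ℝ) {i k : Fin n} (hik : i ≠ k) :
    softmax z i * softmax z' k ≤
      Real.exp (l1 (fun j => z j - z' j)) * (softmax z' i * softmax z k) := by
  have hS : 0 < ∑ k, Real.exp (z k) :=
    Finset.sum_pos (fun _ _ => Real.exp_pos _) ⟨i, Finset.mem_univ _⟩
  have hS' : 0 < ∑ k, Real.exp (z' k) :=
    Finset.sum_pos (fun _ _ => Real.exp_pos _) ⟨i, Finset.mem_univ _⟩
  have hpair : |z i - z' i| + |z k - z' k| ≤ l1 (fun j => z j - z' j) := by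
    rw [← Finset.sum_pair (f := fun j => |z j - z' j|) hik]
    exact Finset.sum_le_sum_of_subset_of_nonneg (Finset.subset_univ _)
      (fun _ _ _ => abs_nonneg _)
  have hexp : Real.exp (z i) * Real.exp (z' k) ≤
      Real.exp (l1 (fun j => z j - z' j)) * (Real.exp (z' i) * Real.exp (z k)) := by
    simp only [← Real.exp_add]
    apply Real.exp_le_exp.mpr
    linarith [le_abs_self (z i - z' i), neg_abs_le (z k - z' k)]
  simp only [softmax]
  rw [div_mul_div_comm, div_mul_div_comm, mul_comm (∑ k, Real.exp (z' k)), ← mul_div_assoc]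
  exact div_le_div_of_nonneg_right hexp (mul_pos hS hS').le

/-- With `u = P (1 - Q)` and `v = Q (1 - P)` one has `P - Q = u - v = (√u - √v) (√u + √v)`.
Here `√u + √v ≤ 1` by AM-GM, and `√v ≥ exp (-δ / 2) √u` by hypothesis, whence
`√u - √v ≤ 1 - exp (-δ / 2) ≤ δ / 2`. -/
lemma sub_le_half_of_odds_le {P Q δ : ℝ} (hP : 0 ≤ P) (hP1 : P ≤ 1) (hQ : 0 ≤ Q) (hQ1 : Q ≤ 1)
    (hδ : 0 ≤ δ) (h : P * (1 - Q) ≤ Real.exp δ * (Q * (1 - P))) : P - Q ≤ δ / 2 := by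
  have hu : 0 ≤ P * (1 - Q) := mul_nonneg hP (by linarith)
  have hv : 0 ≤ Q * (1 - P) := mul_nonneg hQ (by linarith)
  set s := √(P * (1 - Q)) with hs
  set t := √(Q * (1 - P)) with ht
  have hs0 : 0 ≤ s := Real.sqrt_nonneg _
  have ht0 : 0 ≤ t := Real.sqrt_nonneg _
  have hs2 : s ^ 2 = P * (1 - Q) := Real.sq_sqrt hu
  have ht2 : t ^ 2 = Q * (1 - P) := Real.sq_sqrt hv
  have hs_le : s ≤ (P + (1 - Q)) / 2 := by
    apply Real.sqrt_le_iff.mpr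
    constructor
    · linarith
    · nlinarith [sq_nonneg (P - (1 - Q))]
  have ht_le : t ≤ (Q + (1 - P)) / 2 := by
    apply Real.sqrt_le_iff.mpr
    constructor
    · linarith
    · nlinarith [sq_nonneg (Q - (1 - P))]
  have hst : s ≤ Real.exp (δ / 2) * t := by
    refine (pow_le_pow_iff_left₀ hs0 (by positivity) two_ne_zero).mp ?_
    rw [mul_pow, hs2, ht2, ← Real.exp_nat_mul,
      show ((2 : ℕ) : ℝ) * (δ / 2) = δ by push_cast; ring]
    exact h
  have hts : Real.exp (-(δ / 2)) * s ≤ t := by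
    rw [Real.exp_neg, inv_mul_le_iff₀ (Real.exp_pos _)]
    exact hst
  have hexp : 1 - δ / 2 ≤ Real.exp (-(δ / 2)) := by
    linarith [Real.add_one_le_exp (-(δ / 2))]
  have hdiff : s - t ≤ δ / 2 := by
    nlinarith [mul_le_mul_of_nonneg_right hexp hs0]
  have hfac : P - Q = (s - t) * (s + t) := by
    linear_combination ht2 - hs2
  rw [hfac]
  nlinarith [mul_le_mul_of_nonneg_right hdiff (add_nonneg hs0 ht0)]

/-- For every `n ≥ 1` and all `z, z' ∈ ℝⁿ`, softmax is 1-Lipschitz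
from ℓ¹ to ℓ¹: `‖softmax z − softmax z'‖₁ ≤ ‖z − z'‖₁`. -/
theorem softmax_l1_l1_lipschitz {n : ℕ} (hn : 1 ≤ n) (z z' : Fin n → ℝ) :
    l1 (fun j => softmax z j - softmax z' j) ≤ l1 (fun j => z j - z' j) := by
  classical
  set δ := l1 (fun j => z j - z' j) with hδ_def
  have hδ : 0 ≤ δ := Finset.sum_nonneg fun _ _ => abs_nonneg _
  let A : Finset (Fin n) := Finset.univ.filter fun j => softmax z' j < softmax z j
  have hp := Finset.sum_add_sum_compl A (softmax z)
  have hq := Finset.sum_add_sum_compl A (softmax z')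
  rw [sum_softmax hn] at hp hq
  have hp0 : ∀ T : Finset (Fin n), 0 ≤ ∑ j ∈ T, softmax z j :=
    fun T => Finset.sum_nonneg fun j _ => (softmax_pos z j).le
  have hq0 : ∀ T : Finset (Fin n), 0 ≤ ∑ j ∈ T, softmax z' j :=
    fun T => Finset.sum_nonneg fun j _ => (softmax_pos z' j).le
  have hodds : (∑ j ∈ A, softmax z j) * (∑ j ∈ Aᶜ, softmax z' j) ≤
      Real.exp δ * ((∑ j ∈ A, softmax z' j) * (∑ j ∈ Aᶜ, softmax z j)) := by
    rw [Finset.sum_mul_sum, Finset.sum_mul_sum, Finset.mul_sum]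
    refine Finset.sum_le_sum fun i hi => ?_
    rw [Finset.mul_sum]
    refine Finset.sum_le_sum fun k hk => softmax_mul_le z z' ?_
    rintro rfl
    exact Finset.mem_compl.mp hk hi
  have hdiff : (∑ j ∈ A, softmax z j) - (∑ j ∈ A, softmax z' j) ≤ δ / 2 := by
    apply sub_le_half_of_odds_le (hp0 A) (by linarith [hp0 Aᶜ]) (hq0 A)
      (by linarith [hq0 Aᶜ]) hδ
    rw [show 1 - ∑ j ∈ A, softmax z' j = ∑ j ∈ Aᶜ, softmax z' j by linarith,
      show 1 - ∑ j ∈ A, softmax z j = ∑ j ∈ Aᶜ, softmax z j by linarith]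
    exact hodds
  have hA : ∑ j ∈ A, |softmax z j - softmax z' j| =
      (∑ j ∈ A, softmax z j) - (∑ j ∈ A, softmax z' j) := by
    rw [← Finset.sum_sub_distrib]
    refine Finset.sum_congr rfl fun j hj => abs_of_pos ?_
    exact sub_pos.mpr (Finset.mem_filter.mp hj).2
  have hAc : ∑ j ∈ Aᶜ, |softmax z j - softmax z' j| =
      (∑ j ∈ Aᶜ, softmax z' j) - (∑ j ∈ Aᶜ, softmax z j) := by
    rw [← Finset.sum_sub_distrib]
    refine Finset.sum_congr rfl fun j hj => ?_
    have hle : softmax z j ≤ softmax z' j := by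
      by_contra hlt
      exact Finset.mem_compl.mp hj (Finset.mem_filter.mpr ⟨Finset.mem_univ _, not_le.mp hlt⟩)
    rw [abs_of_nonpos (sub_nonpos.mpr hle), neg_sub]
  have hsplit := Finset.sum_add_sum_compl A fun j => |softmax z j - softmax z' j|
  change ∑ j, |softmax z j - softmax z' j| ≤ δ
  linarith
end

section
/- Let X, X̂ ∈ ℝ^{B×d} have all rows of ℓ² norm at most R, and let W_Q, W_K, W_V, W_O ∈ ℝ^{d×d}. For each i define the self-attention output o_i = softmax(x_i W_Q (X W_K)ᵀ / √d) (X W_V) W_O ∈ ℝ^d, where x_i is the i-th row of X, and define ô_i analogously from X̂. Then Σ_{i=1}^B ‖o_i − ô_i‖₂ ≤ ‖W_O‖₂ ‖W_V‖₂ B (1 + 2 R² ‖W_Q‖₂ ‖W_K‖₂ / √d) Σ_{i=1}^B ‖x_i − x̂_i‖₂. -/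
/-!
Write `δⱼ = ‖xⱼ - x̂ⱼ‖`, `S = ∑ δⱼ`, and let `p`, `p̂` be the attention weights of row `i`. Then
`o_i - ô_i = (p (X - X̂) + (p - p̂) X̂) W_V W_O`. The first summand has norm at most `∑ pⱼ δⱼ ≤ S`,
the second at most `R ‖p - p̂‖₁`.

Softmax is 1-Lipschitz from `ℓ^∞` to `ℓ¹` (`l1_softmax_sub_le`), since its derivative paired with
a sign vector is a covariance, bounded by a standard deviation (`weighted_cov_le`). The scores
differ by at most `R ‖W_Q‖ ‖W_K‖ (δᵢ + δⱼ) / √d` (`abs_score_sub_le`), and `δⱼ ≤ S`. Summing over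
`i` gives `∑ᵢ (δᵢ + S) = (1 + B) S ≤ 2 B S`, whence the factor `2 B`.
-/

open scoped BigOperators
open Matrix

/-- `l2` is the norm of `EuclideanSpace`, which gives access to the normed-space API. -/
lemma l2_eq_norm {n : ℕ} (v : Fin n → ℝ) : l2 v = ‖WithLp.toLp 2 v‖ := by
  simp [l2, EuclideanSpace.norm_eq]

lemma l2_nonneg {n : ℕ} (v : Fin n → ℝ) : 0 ≤ l2 v := Real.sqrt_nonneg _

lemma l2_add_le {n : ℕ} (v w : Fin n → ℝ) : l2 (v + w) ≤ l2 v + l2 w := by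
  simp only [l2_eq_norm, WithLp.toLp_add]
  exact norm_add_le _ _

lemma l2_smul {n : ℕ} (c : ℝ) (v : Fin n → ℝ) : l2 (c • v) = |c| * l2 v := by
  simp only [l2_eq_norm, WithLp.toLp_smul, norm_smul, Real.norm_eq_abs]

lemma l2_zero {n : ℕ} : l2 (0 : Fin n → ℝ) = 0 := by simp [l2]

lemma abs_dotProduct_le {n : ℕ} (v w : Fin n → ℝ) : |v ⬝ᵥ w| ≤ l2 v * l2 w := by
  unfold l2
  rw [← Real.sqrt_mul (by positivity)]
  exact Real.abs_le_sqrt (Finset.sum_mul_sq_le_sq_mul_sq _ _ _)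

lemma abs_apply_le_l2 {n : ℕ} (v : Fin n → ℝ) (i : Fin n) : |v i| ≤ l2 v := by
  unfold l2
  exact Real.abs_le_sqrt
    (Finset.single_le_sum (f := fun j => v j ^ 2) (fun j _ => sq_nonneg _) (Finset.mem_univ i))

/-- Triangle inequality for the combination `c ᵥ* M` of the rows of `M`. -/
lemma l2_vecMul_le_sum {m n : ℕ} (c : Fin m → ℝ) (M : Matrix (Fin m) (Fin n) ℝ) :
    l2 (c ᵥ* M) ≤ ∑ i, |c i| * l2 (M i) := by
  rw [Matrix.vecMul_eq_sum]
  calc l2 (∑ i, c i • M i) ≤ ∑ i, l2 (c i • M i) :=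
        Finset.le_sum_of_subadditive l2 l2_zero.le l2_add_le _ _
    _ = ∑ i, |c i| * l2 (M i) := by simp only [l2_smul]

/-- The set defining `spec` is bounded, so its supremum is not the junk value. -/
lemma spec_bddAbove {m n : ℕ} (W : Matrix (Fin m) (Fin n) ℝ) :
    BddAbove {c | ∃ x : Fin m → ℝ, l2 x ≤ 1 ∧ c = l2 (x ᵥ* W)} := by
  refine ⟨∑ i, l2 (W i), ?_⟩
  rintro _ ⟨x, hx, rfl⟩
  refine (l2_vecMul_le_sum x W).trans (Finset.sum_le_sum fun i _ => ?_)
  exact mul_le_of_le_one_left (l2_nonneg _) ((abs_apply_le_l2 x i).trans hx)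

lemma spec_nonneg {m n : ℕ} (W : Matrix (Fin m) (Fin n) ℝ) : 0 ≤ spec W :=
  Real.sSup_nonneg (by rintro _ ⟨x, _, rfl⟩; exact l2_nonneg _)

lemma l2_vecMul_le {m n : ℕ} (x : Fin m → ℝ) (W : Matrix (Fin m) (Fin n) ℝ) :
    l2 (x ᵥ* W) ≤ l2 x * spec W := by
  rcases (l2_nonneg x).eq_or_lt with h | h
  · have hx : x = 0 := by
      funext i
      have := abs_apply_le_l2 x i
      rw [← h] at this
      simpa using this
    simp [hx, l2_zero]
  · have h1 : l2 (((l2 x)⁻¹ • x) ᵥ* W) ≤ spec W := by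
      refine le_csSup (spec_bddAbove W) ⟨_, ?_, rfl⟩
      rw [l2_smul, abs_of_pos (inv_pos.2 h), inv_mul_cancel₀ h.ne']
    rw [Matrix.smul_vecMul, l2_smul, abs_of_pos (inv_pos.2 h)] at h1
    rwa [inv_mul_le_iff₀ h] at h1

lemma softmax_nonneg {n : ℕ} (z : Fin n → ℝ) (j : Fin n) : 0 ≤ softmax z j := by
  unfold softmax; positivity

lemma softmax_le_one {n : ℕ} (z : Fin n → ℝ) (j : Fin n) : softmax z j ≤ 1 := by
  unfold softmax
  refine div_le_one_of_le₀ ?_ (by positivity)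
  exact Finset.single_le_sum (f := fun k => Real.exp (z k)) (fun k _ => (Real.exp_pos _).le)
    (Finset.mem_univ j)

/-- For nonnegative weights `e`, coefficients `|s j| ≤ 1` and values `|v j| ≤ M`, the covariance of
`s` and `v` under the normalized weights is at most `M` (stated with denominators cleared): it is
bounded by the mean absolute deviation of `v`, hence by its standard deviation. -/
lemma weighted_cov_le {n : ℕ} (e s v : Fin n → ℝ) (M : ℝ) (hM : 0 ≤ M) (he : ∀ j, 0 ≤ e j)
    (hs : ∀ j, |s j| ≤ 1) (hv : ∀ j, |v j| ≤ M) :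
    (∑ j, s j * (e j * v j)) * (∑ j, e j) - (∑ j, s j * e j) * (∑ j, e j * v j)
      ≤ M * (∑ j, e j) ^ 2 := by
  set Z := ∑ j, e j with hZ
  set Z' := ∑ j, e j * v j with hZ'
  have hZ0 : 0 ≤ Z := Finset.sum_nonneg fun j _ => he j
  have h1 : (∑ j, s j * (e j * v j)) * Z - (∑ j, s j * e j) * Z'
      = ∑ j, s j * (e j * (v j * Z - Z')) := by
    rw [Finset.sum_mul, Finset.sum_mul, ← Finset.sum_sub_distrib]
    exact Finset.sum_congr rfl fun j _ => by ring
  have h2 : ∑ j, s j * (e j * (v j * Z - Z')) ≤ ∑ j, e j * |v j * Z - Z'| := by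
    refine Finset.sum_le_sum fun j _ => ?_
    calc s j * (e j * (v j * Z - Z')) ≤ |s j * (e j * (v j * Z - Z'))| := le_abs_self _
      _ = |s j| * (e j * |v j * Z - Z'|) := by rw [abs_mul, abs_mul, abs_of_nonneg (he j)]
      _ ≤ e j * |v j * Z - Z'| :=
        mul_le_of_le_one_left (mul_nonneg (he j) (abs_nonneg _)) (hs j)
  have h3 : (∑ j, e j * |v j * Z - Z'|) ^ 2 ≤ Z * ∑ j, e j * (v j * Z - Z') ^ 2 := by
    refine Finset.sum_sq_le_sum_mul_sum_of_sq_le_mul _ (fun j _ => he j)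
      (fun j _ => mul_nonneg (he j) (sq_nonneg _)) fun j _ => ?_
    rw [mul_pow, sq_abs]; exact le_of_eq (by ring)
  have h4 : ∑ j, e j * (v j * Z - Z') ^ 2 = Z ^ 2 * (∑ j, e j * v j ^ 2) - Z * Z' ^ 2 := by
    have : ∑ j, e j * (v j * Z - Z') ^ 2
        = Z ^ 2 * (∑ j, e j * v j ^ 2) - 2 * Z * Z' * (∑ j, e j * v j)
          + Z' ^ 2 * ∑ j, e j := by
      simp only [Finset.mul_sum]
      rw [← Finset.sum_sub_distrib, ← Finset.sum_add_distrib]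
      exact Finset.sum_congr rfl fun j _ => by ring
    rw [this, ← hZ, ← hZ']; ring
  have h5 : ∑ j, e j * v j ^ 2 ≤ Z * M ^ 2 := by
    rw [hZ, Finset.sum_mul]
    exact Finset.sum_le_sum fun j _ =>
      mul_le_mul_of_nonneg_left (sq_le_sq' (abs_le.1 (hv j)).1 (abs_le.1 (hv j)).2) (he j)
  have h6 : (∑ j, e j * |v j * Z - Z'|) ^ 2 ≤ (M * Z ^ 2) ^ 2 := by
    refine h3.trans ?_
    rw [h4]
    have a1 : 0 ≤ Z ^ 3 * (Z * M ^ 2 - ∑ j, e j * v j ^ 2) :=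
      mul_nonneg (by positivity) (sub_nonneg.2 h5)
    nlinarith [sq_nonneg (Z * Z')]
  rw [h1]
  exact h2.trans (le_of_abs_le (abs_le_of_sq_le_sq h6 (by positivity)))

/-- Softmax is 1-Lipschitz from `ℓ^∞` to `ℓ¹`: the mean value theorem is applied to
`t ↦ ∑ j, sⱼ softmax(w + t (z - w))ⱼ`, where `s` is the sign vector of
`softmax z - softmax w`. -/
lemma l1_softmax_sub_le {n : ℕ} (hn : 0 < n) (z w : Fin n → ℝ) (M : ℝ)
    (hM : ∀ j, |z j - w j| ≤ M) :
    ∑ j, |softmax z j - softmax w j| ≤ M := by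
  have : Nonempty (Fin n) := ⟨⟨0, hn⟩⟩
  have hM0 : 0 ≤ M := (abs_nonneg _).trans (hM ⟨0, hn⟩)
  let s : Fin n → ℝ := fun j => SignType.sign (softmax z j - softmax w j)
  have hs : ∀ j, |s j| ≤ 1 := by
    intro j
    simp only [s]
    rcases SignType.sign (softmax z j - softmax w j) with _ | _ | _ <;> simp
  let v : Fin n → ℝ := fun j => z j - w j
  let e : ℝ → Fin n → ℝ := fun t j => Real.exp (w j + t * v j)
  have hde : ∀ t j, HasDerivAt (fun t => e t j) (e t j * v j) t := by
    intro t j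
    have := (((hasDerivAt_id t).mul_const (v j)).const_add (w j)).exp
    simpa [e] using this
  have hZpos : ∀ t, 0 < ∑ j, e t j := fun t =>
    Finset.sum_pos (fun j _ => Real.exp_pos _) Finset.univ_nonempty
  let g : ℝ → ℝ := fun t => (∑ j, s j * e t j) / ∑ j, e t j
  have hg : ∀ t, HasDerivAt g (((∑ j, s j * (e t j * v j)) * (∑ j, e t j)
      - (∑ j, s j * e t j) * (∑ j, e t j * v j)) / (∑ j, e t j) ^ 2) t := by
    intro t
    have hN : HasDerivAt (fun t => ∑ j, s j * e t j) (∑ j, s j * (e t j * v j)) t :=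
      HasDerivAt.fun_sum fun j _ => (hde t j).const_mul (s j)
    have hZ : HasDerivAt (fun t => ∑ j, e t j) (∑ j, e t j * v j) t :=
      HasDerivAt.fun_sum fun j _ => hde t j
    exact hN.div hZ (hZpos t).ne'
  obtain ⟨c, _, hc⟩ := exists_hasDerivAt_eq_slope g _ (zero_lt_one' ℝ)
    (fun t _ => (hg t).continuousAt.continuousWithinAt) (fun t _ => hg t)
  have hle := weighted_cov_le (e c) s v M hM0 (fun j => (Real.exp_pos _).le) hs hM
  rw [← div_le_iff₀ (pow_pos (hZpos c) 2), hc] at hle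
  have hg1 : g 1 = ∑ j, s j * softmax z j := by
    simp [g, e, v, softmax, Finset.sum_div, mul_div_assoc]
  have hg0 : g 0 = ∑ j, s j * softmax w j := by
    simp [g, e, softmax, Finset.sum_div, mul_div_assoc]
  calc ∑ j, |softmax z j - softmax w j| = g 1 - g 0 := by
        rw [hg1, hg0, ← Finset.sum_sub_distrib]
        refine Finset.sum_congr rfl fun j _ => ?_
        rw [← mul_sub, sign_mul_self]
    _ ≤ M := by simpa using hle

/-- Perturbation of a bilinear score `⟨q Q, k K⟩` in both arguments. -/
lemma abs_score_sub_le {d : ℕ} (R : ℝ) (q qh k kh : Fin d → ℝ) (hk : l2 k ≤ R)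
    (hqh : l2 qh ≤ R) (Q K : Matrix (Fin d) (Fin d) ℝ) :
    |(q ᵥ* Q) ⬝ᵥ (k ᵥ* K) - (qh ᵥ* Q) ⬝ᵥ (kh ᵥ* K)|
      ≤ R * spec Q * spec K * (l2 (q - qh) + l2 (k - kh)) := by
  have hR : 0 ≤ R := (l2_nonneg _).trans hk
  have hQ := spec_nonneg Q
  have hK := spec_nonneg K
  have h1 : (q ᵥ* Q) ⬝ᵥ (k ᵥ* K) - (qh ᵥ* Q) ⬝ᵥ (kh ᵥ* K)
      = ((q - qh) ᵥ* Q) ⬝ᵥ (k ᵥ* K) + (qh ᵥ* Q) ⬝ᵥ ((k - kh) ᵥ* K) := by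
    simp only [Matrix.sub_vecMul, sub_dotProduct, dotProduct_sub]; ring
  have h2 : |((q - qh) ᵥ* Q) ⬝ᵥ (k ᵥ* K)| ≤ (l2 (q - qh) * spec Q) * (R * spec K) :=
    (abs_dotProduct_le _ _).trans <| mul_le_mul (l2_vecMul_le _ _)
      ((l2_vecMul_le _ _).trans (mul_le_mul_of_nonneg_right hk hK)) (l2_nonneg _)
      (mul_nonneg (l2_nonneg _) hQ)
  have h3 : |(qh ᵥ* Q) ⬝ᵥ ((k - kh) ᵥ* K)| ≤ (R * spec Q) * (l2 (k - kh) * spec K) :=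
    (abs_dotProduct_le _ _).trans <| mul_le_mul
      ((l2_vecMul_le _ _).trans (mul_le_mul_of_nonneg_right hqh hQ)) (l2_vecMul_le _ _)
      (l2_nonneg _) (mul_nonneg hR hQ)
  rw [h1]
  refine (abs_add_le _ _).trans ((add_le_add h2 h3).trans (le_of_eq ?_))
  ring

/-- self-attention output stability bound:
`Σ_i ‖o_i − ô_i‖₂ ≤ ‖W_O‖₂‖W_V‖₂ B (1 + 2R²‖W_Q‖₂‖W_K‖₂/√d) Σ_i ‖x_i − x̂_i‖₂`. -/
theorem attention_output_rows_l2_bound {B d : ℕ} (R : ℝ)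
    (X Xh : Matrix (Fin B) (Fin d) ℝ)
    (hX : ∀ i, l2 (X i) ≤ R) (hXh : ∀ i, l2 (Xh i) ≤ R)
    (WQ WK WV WO : Matrix (Fin d) (Fin d) ℝ) :
    ∑ i, l2 (fun k =>
        ((softmax (fun j => ((X i ᵥ* WQ) ᵥ* (X * WK)ᵀ) j / Real.sqrt d)
            ᵥ* (X * WV)) ᵥ* WO) k
      - ((softmax (fun j => ((Xh i ᵥ* WQ) ᵥ* (Xh * WK)ᵀ) j / Real.sqrt d)
            ᵥ* (Xh * WV)) ᵥ* WO) k)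
    ≤ spec WO * spec WV * B * (1 + 2 * R^2 * spec WQ * spec WK / Real.sqrt d)
        * ∑ i, l2 (fun k => X i k - Xh i k) := by
  rcases Nat.eq_zero_or_pos B with rfl | hB
  · simp
  have hB1 : (1 : ℝ) ≤ B := by exact_mod_cast hB
  have hR : 0 ≤ R := (l2_nonneg _).trans (hX ⟨0, hB⟩)
  have hO := spec_nonneg WO
  have hV := spec_nonneg WV
  set δ : Fin B → ℝ := fun i => l2 (X i - Xh i) with hδ
  have hδ0 : ∀ i, 0 ≤ δ i := fun i => l2_nonneg _
  set S : ℝ := ∑ i, δ i with hS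
  have hS0 : 0 ≤ S := Finset.sum_nonneg fun i _ => hδ0 i
  have hδS : ∀ i, δ i ≤ S := fun i =>
    Finset.single_le_sum (fun j _ => hδ0 j) (Finset.mem_univ i)
  set C : ℝ := R * spec WQ * spec WK / Real.sqrt d with hC
  have hC0 : 0 ≤ C := by
    have := spec_nonneg WQ
    have := spec_nonneg WK
    positivity
  have hrow : ∀ i, l2 (fun k =>
        ((softmax (fun j => ((X i ᵥ* WQ) ᵥ* (X * WK)ᵀ) j / Real.sqrt d)
            ᵥ* (X * WV)) ᵥ* WO) k
      - ((softmax (fun j => ((Xh i ᵥ* WQ) ᵥ* (Xh * WK)ᵀ) j / Real.sqrt d)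
            ᵥ* (Xh * WV)) ᵥ* WO) k)
      ≤ spec WO * spec WV * (S + R * (C * (δ i + S))) := by
    intro i
    set z : Fin B → ℝ := fun j => ((X i ᵥ* WQ) ᵥ* (X * WK)ᵀ) j / Real.sqrt d with hz
    set w : Fin B → ℝ := fun j => ((Xh i ᵥ* WQ) ᵥ* (Xh * WK)ᵀ) j / Real.sqrt d with hw
    have hscore : ∀ j, |z j - w j| ≤ C * (δ i + S) := by
      intro j
      have h := abs_score_sub_le R (X i) (Xh i) (X j) (Xh j) (hX j) (hXh i) WQ WK
      have e1 : z j - w j = ((X i ᵥ* WQ) ⬝ᵥ (X j ᵥ* WK)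
          - (Xh i ᵥ* WQ) ⬝ᵥ (Xh j ᵥ* WK)) / Real.sqrt d := by
        rw [sub_div]; rfl
      rw [e1, abs_div, abs_of_nonneg (Real.sqrt_nonneg _)]
      calc _ ≤ R * spec WQ * spec WK * (δ i + δ j) / Real.sqrt d :=
            div_le_div_of_nonneg_right h (Real.sqrt_nonneg _)
        _ = C * (δ i + δ j) := by rw [hC]; ring
        _ ≤ C * (δ i + S) := by gcongr; exact hδS j
    have hsm := l1_softmax_sub_le hB z w _ hscore
    have hdiff : (fun k => ((softmax z ᵥ* (X * WV)) ᵥ* WO) k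
          - ((softmax w ᵥ* (Xh * WV)) ᵥ* WO) k)
        = ((softmax z ᵥ* (X - Xh) + (softmax z - softmax w) ᵥ* Xh) ᵥ* WV) ᵥ* WO := by
      have : softmax z ᵥ* (X - Xh) + (softmax z - softmax w) ᵥ* Xh
          = softmax z ᵥ* X - softmax w ᵥ* Xh := by
        rw [Matrix.vecMul_sub, Matrix.sub_vecMul]; abel
      rw [this, Matrix.sub_vecMul, Matrix.sub_vecMul, Matrix.vecMul_vecMul (softmax z) X,
        Matrix.vecMul_vecMul (softmax w) Xh]
      rfl
    have hA : l2 (softmax z ᵥ* (X - Xh)) ≤ S := by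
      refine (l2_vecMul_le_sum _ _).trans (Finset.sum_le_sum fun j _ => ?_)
      rw [abs_of_nonneg (softmax_nonneg z j)]
      exact mul_le_of_le_one_left (l2_nonneg _) (softmax_le_one z j)
    have hD : l2 ((softmax z - softmax w) ᵥ* Xh) ≤ R * (C * (δ i + S)) := by
      refine (l2_vecMul_le_sum _ _).trans ?_
      calc ∑ j, |(softmax z - softmax w) j| * l2 (Xh j)
          ≤ ∑ j, |softmax z j - softmax w j| * R :=
            Finset.sum_le_sum fun j _ => mul_le_mul_of_nonneg_left (hXh j) (abs_nonneg _)
        _ = R * ∑ j, |softmax z j - softmax w j| := by rw [← Finset.sum_mul, mul_comm]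
        _ ≤ R * (C * (δ i + S)) := mul_le_mul_of_nonneg_left hsm hR
    rw [hdiff]
    calc _ ≤ l2 (softmax z ᵥ* (X - Xh) + (softmax z - softmax w) ᵥ* Xh) * spec WV * spec WO :=
          (l2_vecMul_le _ _).trans (mul_le_mul_of_nonneg_right (l2_vecMul_le _ _) hO)
      _ ≤ (S + R * (C * (δ i + S))) * spec WV * spec WO := by
          gcongr
          exact (l2_add_le _ _).trans (add_le_add hA hD)
      _ = _ := by ring
  calc _ ≤ ∑ i, spec WO * spec WV * (S + R * (C * (δ i + S))) :=
        Finset.sum_le_sum fun i _ => hrow i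
    _ = spec WO * spec WV * (B * S + R * C * (S + B * S)) := by
        rw [← Finset.mul_sum, Finset.sum_add_distrib, ← Finset.mul_sum, ← Finset.mul_sum,
          Finset.sum_add_distrib, ← hS]
        simp only [Finset.sum_const, Finset.card_univ, Fintype.card_fin, nsmul_eq_mul]
        ring
    _ ≤ spec WO * spec WV * (B * S + R * C * (B * S + B * S)) := by
        gcongr
        exact le_mul_of_one_le_left hS0 hB1
    _ = spec WO * spec WV * B * (1 + 2 * R^2 * spec WQ * spec WK / Real.sqrt d) * S := by
        rw [hC]; ring
end
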